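/- Let σ and α be sum indecomposable permutations with |α| ≥ 2, and let r ≥ 1 be an integer. Then μ(σ, ⊕ʳα) = μ(σ,α) and μ(σ, 1 ⊕ (⊕ʳα) ⊕ 1) = μ(σ,α), while μ(σ, 1 ⊕ (⊕ʳα)) = −μ(σ,α) and μ(σ, (⊕ʳα) ⊕ 1) = −μ(σ,α). -/

import Mathlib

/-!
The permutation pattern poset and its Möbius function.

A permutation of length `n` is represented as an element of the symmetric
group on `Fin n`; the collection of all permutations of all lengths is the
sigma type `PPerm`.  Pattern containment `PPerm.Le` makes `PPerm` into the
permutation pattern poset, and `mu` is its Möbius function, defined by the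
usual recursion `μ(σ,σ) = 1`, `μ(σ,π) = -∑_{σ ≤ λ < π} μ(σ,λ)` for `σ < π`
and `μ(σ,π) = 0` otherwise.
-/

open scoped Classical

/-- A permutation of an arbitrary finite length `n`, as an element of the
symmetric group on `Fin n`. -/
abbrev PPerm : Type := Σ n : ℕ, Equiv.Perm (Fin n)

namespace PPerm

/-- Classical pattern containment `σ ≤ π`: there is a strictly increasing map
of positions along which `π` realises the same relative order as `σ`. -/
def Le (σ π : PPerm) : Prop :=
  ∃ f : Fin σ.1 → Fin π.1, StrictMono f ∧
    ∀ a b : Fin σ.1, σ.2 a < σ.2 b ↔ π.2 (f a) < π.2 (f b)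

/-- Strict pattern containment. -/
def Lt (σ π : PPerm) : Prop := Le σ π ∧ σ ≠ π

/-- The permutation `1` of length one. -/
def one : PPerm := ⟨1, 1⟩

/-- The direct sum `α ⊕ β` of two permutations: `β` is placed after and
above `α`. -/
def dsum (α β : PPerm) : PPerm :=
  ⟨α.1 + β.1, finSumFinEquiv.symm.trans ((Equiv.sumCongr α.2 β.2).trans finSumFinEquiv)⟩

end PPerm

/-- Fuelled recursion computing the Möbius function of the permutation
pattern poset.  Any `λ` with `σ ≤ λ < π` has length `< |π|`, so for any
fuel `≥ |π| + 1` this computes the standard recursion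
`μ(σ,σ) = 1`, `μ(σ,π) = -∑_{σ ≤ λ < π} μ(σ,λ)` for `σ < π`, and
`μ(σ,π) = 0` when `σ ≰ π`. -/
noncomputable def muAux : ℕ → PPerm → PPerm → ℤ
  | 0, _, _ => 0
  | n + 1, σ, π =>
    if σ = π then 1
    else if PPerm.Le σ π then
      - ∑ m ∈ Finset.range π.1,
          ∑ p ∈ Finset.univ.filter
              (fun p : Equiv.Perm (Fin m) => PPerm.Le σ ⟨m, p⟩ ∧ PPerm.Le ⟨m, p⟩ π),
            muAux n σ ⟨m, p⟩
    else 0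

/-- The Möbius function of the permutation pattern poset. -/
noncomputable def mu (σ π : PPerm) : ℤ := muAux (π.1 + 1) σ π

/-- The closed interval `[σ, π]` of the permutation pattern poset, as a
finset (any `λ ≤ π` has length `≤ |π|`). -/
noncomputable def intervalCC (σ π : PPerm) : Finset PPerm :=
  (Finset.range (π.1 + 1)).biUnion fun m =>
    (Finset.univ.filter fun p : Equiv.Perm (Fin m) =>
        PPerm.Le σ ⟨m, p⟩ ∧ PPerm.Le ⟨m, p⟩ π).image fun p => (⟨m, p⟩ : PPerm)

/-- The half-open interval `[σ, π)` of the permutation pattern poset. -/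
noncomputable def intervalCO (σ π : PPerm) : Finset PPerm :=
  (intervalCC σ π).filter fun lam => lam ≠ π

/-- A permutation is sum indecomposable if it is nonempty and cannot be
written as the direct sum of two nonempty permutations. -/
def SumIndecomposable (p : PPerm) : Prop :=
  0 < p.1 ∧ ¬ ∃ a b : PPerm, 0 < a.1 ∧ 0 < b.1 ∧ p = PPerm.dsum a b

/-- `⊕ʳα`: the direct sum of `r` copies of `α` (the empty permutation for
`r = 0`). -/
def PPerm.nsum (α : PPerm) : ℕ → PPerm
  | 0 => ⟨0, 1⟩
  | 1 => α
  | n + 2 => PPerm.dsum (PPerm.nsum α (n + 1)) α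

/-!
For indecomposable `σ`, the function `μ(σ, ·)` is determined by its values at indecomposables and
by the vanishing of its sums over `Iic π` for decomposable `π`. Another function with these
properties is the combination over indecomposable `α`, with coefficients `μ(σ, α)`, of the functions
equal to `(-1) ^ (e + f)` at `1ᵉ ⊕ (⊕ʳα) ⊕ 1ᶠ` (`e, f ∈ {0, 1}`, `r ≥ 1`) and to `0` elsewhere. Its
sums vanish because, by splitting an embedding into `a ⊕ b` at the end of `a`, such a permutation is
contained in `a ⊕ b` exactly when `r ≤ s_e + t_f`, where `s_e` depends only on `a` and `t_f` only on
`b`; the alternating sum of the counts `s_e + t_f` over `e` and `f` is zero.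
-/

section OrderLemmas

theorem exists_forall_mem_iff_lt {P : Type*} [Preorder P] {u : ℕ → P} (hu : StrictMono u)
    {s : Set P} (hs : IsLowerSet s) (hfin : s.Finite) : ∃ t, ∀ i, u i ∈ s ↔ i < t := by
  have hpre : (u ⁻¹' s).Finite := hfin.preimage hu.injective.injOn
  obtain huniv | ⟨t, ht⟩ := (hs.preimage hu.monotone).eq_univ_or_Iio
  · exact absurd (huniv ▸ hpre) Set.infinite_univ
  · exact ⟨t, fun i => Set.ext_iff.1 ht i⟩

theorem eq_of_forall_eq_or_sum_Iic_eq {P G : Type*} [PartialOrder P] [LocallyFiniteOrderBot P]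
    [AddCommGroup G] {f g : P → G}
    (h : ∀ p, f p = g p ∨ ∑ q ∈ Finset.Iic p, f q = ∑ q ∈ Finset.Iic p, g q) : f = g := by
  ext p
  induction hp : (Finset.Iic p).card using Nat.strong_induction_on generalizing p with
  | _ n ih =>
    refine (h p).elim id fun hsum => ?_
    have hlt : ∑ q ∈ Finset.Iio p, f q = ∑ q ∈ Finset.Iio p, g q :=
      Finset.sum_congr rfl fun q hq => ih _ (hp ▸ Finset.card_lt_card
        (Finset.Iic_ssubset_Iic.2 (Finset.mem_Iio.1 hq))) q rfl
    rwa [← Finset.sum_Iio_add_eq_sum_Iic, ← Finset.sum_Iio_add_eq_sum_Iic, hlt,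
      add_right_inj] at hsum

theorem eq_of_forall_apply_lt_iff {e : Equiv.Perm ℕ} {m n : ℕ} (h : ∀ i, e i < n ↔ i < m) :
    m = n := by
  have : (Finset.range m).map e.toEmbedding = Finset.range n := by
    ext i
    simpa [← Equiv.eq_symm_apply] using (h (e.symm i)).symm
  simpa using congrArg Finset.card this

end OrderLemmas

namespace PPerm

variable {a b c d σ π : PPerm}

section OneLine

/-- The one-line notation of a permutation of `{0, …, n - 1}`, extended by the identity to a
permutation of `ℕ`; with this extension `oneLine_add` and the transfer of containment to `ℕ`
need no dependent casts. -/
def oneLine (π : PPerm) : Equiv.Perm ℕ := π.2.extendDomain Fin.equivSubtype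

theorem oneLine_of_lt (π : PPerm) {i : ℕ} (hi : i < π.1) : oneLine π i = π.2 ⟨i, hi⟩ :=
  Equiv.Perm.extendDomain_apply_subtype (b := i) π.2 Fin.equivSubtype hi

theorem oneLine_val (π : PPerm) (i : Fin π.1) : oneLine π i = π.2 i := oneLine_of_lt π i.2

theorem oneLine_of_le (π : PPerm) {i : ℕ} (hi : π.1 ≤ i) : oneLine π i = i :=
  Equiv.Perm.extendDomain_apply_not_subtype _ _ hi.not_gt

theorem oneLine_lt_iff (π : PPerm) (i : ℕ) : oneLine π i < π.1 ↔ i < π.1 := by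
  rcases lt_or_ge i π.1 with hi | hi
  · simp [oneLine_of_lt π hi, hi]
  · rw [oneLine_of_le π hi]

theorem ext_oneLine (hlen : σ.1 = π.1) (h : ∀ i < σ.1, oneLine σ i = oneLine π i) : σ = π := by
  obtain ⟨n, σ⟩ := σ
  obtain ⟨m, π⟩ := π
  obtain rfl : n = m := hlen
  congr 1
  ext i
  rw [← oneLine_val ⟨n, σ⟩ i, ← oneLine_val ⟨n, π⟩ i, h i i.2]

theorem exists_oneLine_eq {n : ℕ} {g : ℕ → ℕ} (hmaps : ∀ i < n, g i < n)
    (hinj : Set.InjOn g (Set.Iio n)) : ∃ π : PPerm, π.1 = n ∧ ∀ i < n, oneLine π i = g i := by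
  have hbij : Function.Bijective fun i : Fin n => (⟨g i, hmaps i i.2⟩ : Fin n) :=
    Finite.injective_iff_bijective.1 fun i j hij =>
      Fin.ext (hinj i.2 j.2 (congrArg Fin.val hij))
  exact ⟨⟨n, Equiv.ofBijective _ hbij⟩, rfl, fun i hi => oneLine_of_lt _ hi⟩

end OneLine

section Monoid

instance : Zero PPerm := ⟨⟨0, 1⟩⟩

instance : Add PPerm := ⟨dsum⟩

@[simp] theorem length_zero : (0 : PPerm).1 = 0 := rfl

@[simp] theorem length_one : one.1 = 1 := rfl

@[simp] theorem length_add (a b : PPerm) : (a + b).1 = a.1 + b.1 := rfl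

theorem dsum_eq_add (a b : PPerm) : dsum a b = a + b := rfl

theorem add_apply_castAdd (a b : PPerm) (i : Fin a.1) :
    (a + b).2 (Fin.castAdd b.1 i) = Fin.castAdd b.1 (a.2 i) :=
  congrArg (fun x => finSumFinEquiv (Equiv.sumCongr a.2 b.2 x))
    (finSumFinEquiv_symm_apply_castAdd i)

theorem add_apply_natAdd (a b : PPerm) (i : Fin b.1) :
    (a + b).2 (Fin.natAdd a.1 i) = Fin.natAdd a.1 (b.2 i) :=
  congrArg (fun x => finSumFinEquiv (Equiv.sumCongr a.2 b.2 x))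
    (finSumFinEquiv_symm_apply_natAdd i)

theorem oneLine_add (a b : PPerm) (i : ℕ) :
    oneLine (a + b) i = if i < a.1 then oneLine a i else a.1 + oneLine b (i - a.1) := by
  split_ifs with ha
  · rw [oneLine_of_lt a ha]
    exact (oneLine_val (a + b) _).trans (congrArg Fin.val (add_apply_castAdd a b ⟨i, ha⟩))
  · obtain ⟨j, rfl⟩ := Nat.exists_eq_add_of_le (not_lt.1 ha)
    rw [Nat.add_sub_cancel_left]
    rcases lt_or_ge j b.1 with hb | hb
    · rw [oneLine_of_lt b hb]
      exact (oneLine_val (a + b) _).trans (congrArg Fin.val (add_apply_natAdd a b ⟨j, hb⟩))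
    · rw [oneLine_of_le b hb, oneLine_of_le (a + b) (Nat.add_le_add_left hb _)]

theorem oneLine_add_lt_iff (a b : PPerm) (i : ℕ) : oneLine (a + b) i < a.1 ↔ i < a.1 := by
  have := oneLine_lt_iff a i
  rw [oneLine_add]
  split_ifs <;> omega

instance : AddMonoid PPerm where
  add_assoc a b c := ext_oneLine (Nat.add_assoc _ _ _) fun i _ => by
    simp only [oneLine_add, length_add, Nat.sub_sub]
    split_ifs <;> omega
  zero_add a := ext_oneLine (Nat.zero_add _) fun i _ => by simp [oneLine_add]
  add_zero a := ext_oneLine rfl fun i hi => by rw [oneLine_add, if_pos (by simpa using hi)]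
  nsmul := nsmulRec

theorem eq_zero_of_length_eq_zero (h : a.1 = 0) : a = 0 :=
  ext_oneLine h fun i hi => by omega

@[simp] theorem length_nsmul (a : PPerm) (n : ℕ) : (n • a).1 = n * a.1 := by
  induction n with
  | zero => simp
  | succ n ih => rw [succ_nsmul, length_add, ih, Nat.succ_mul]

theorem nsum_eq_nsmul (a : PPerm) (r : ℕ) : nsum a r = r • a := by
  induction r using nsum.induct with
  | case1 => exact (zero_nsmul a).symm
  | case2 => exact (one_nsmul a).symm
  | case3 n ih => rw [succ_nsmul, ← ih]; rfl

theorem add_eq_add_of_length_eq (h : a + b = c + d) (hlen : a.1 = c.1) : a = c ∧ b = d := by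
  have hlen' : a.1 + b.1 = c.1 + d.1 := congrArg Sigma.fst h
  have hval (i : ℕ) := DFunLike.congr_fun (congrArg oneLine h) i
  simp only [oneLine_add] at hval
  refine ⟨ext_oneLine hlen fun i hi => ?_, ext_oneLine (by omega) fun i _ => ?_⟩
  · simpa [hi, ← hlen] using hval i
  · simpa [← hlen] using hval (a.1 + i)

theorem exists_eq_add_of_oneLine_lt_iff {t : ℕ} (ht : t ≤ π.1)
    (h : ∀ i, oneLine π i < t ↔ i < t) : ∃ x y : PPerm, x.1 = t ∧ π = x + y := by
  obtain ⟨x, hx, hx_val⟩ := exists_oneLine_eq (n := t) (g := oneLine π) (fun i => (h i).2)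
    (oneLine π).injective.injOn
  obtain ⟨y, hy, hy_val⟩ := exists_oneLine_eq (n := π.1 - t) (g := fun i => oneLine π (t + i) - t)
    (fun i hi => by have := (oneLine_lt_iff π (t + i)).2; omega)
    (fun i _ j _ (hij : oneLine π (t + i) - t = oneLine π (t + j) - t) => by
      have hi := h (t + i)
      have hj := h (t + j)
      have : t + i = t + j := (oneLine π).injective (by omega)
      omega)
  refine ⟨x, y, hx, ext_oneLine (by rw [length_add]; omega) fun i hi => ?_⟩
  rw [oneLine_add, hx]
  split_ifs with hit
  · exact (hx_val i hit).symm
  · have := h i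
    rw [hy_val (i - t) (by omega), Nat.add_sub_cancel' (not_lt.1 hit)]
    omega

-- Levi's lemma for the monoid of direct sums.
theorem exists_add_of_add_eq_add (h : a + b = c + d) (hlen : c.1 ≤ a.1) :
    ∃ z, a = c + z ∧ d = z + b := by
  obtain ⟨x, z, hx, rfl⟩ : ∃ x z : PPerm, x.1 = c.1 ∧ a = x + z := by
    refine exists_eq_add_of_oneLine_lt_iff hlen fun i => ?_
    have ha := oneLine_lt_iff a i
    have hc := oneLine_add_lt_iff c d i
    rw [← h, oneLine_add] at hc
    split_ifs at hc <;> omega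
  rw [add_assoc] at h
  obtain ⟨rfl, rfl⟩ := add_eq_add_of_length_eq h hx
  exact ⟨z, rfl, rfl⟩

end Monoid

section Order

/-- Strictly increasing self-maps of `ℕ` carrying exactly the positions (or values) of a
permutation of length `m` to positions (or values) of one of length `n`. -/
structure IsSegmentEmbedding (m n : ℕ) (f : ℕ → ℕ) : Prop where
  strictMono : StrictMono f
  lt_iff : ∀ i, f i < n ↔ i < m

theorem exists_isSegmentEmbedding {m n : ℕ} {u : Fin m → Fin n} (hu : StrictMono u) :
    ∃ f, IsSegmentEmbedding m n f ∧ ∀ i : Fin m, f i = u i := by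
  refine ⟨fun i => if hi : i < m then u ⟨i, hi⟩ else n + i, ⟨fun i j hij => ?_, fun i => ?_⟩, ?_⟩
  · split_ifs with hi hj
    · exact hu hij
    · omega
    · omega
    · omega
  · split_ifs <;> simp [*]
  · simp

theorem IsSegmentEmbedding.concat {m n m' n' : ℕ} {f g : ℕ → ℕ} (hf : IsSegmentEmbedding m n f)
    (hg : IsSegmentEmbedding m' n' g) : IsSegmentEmbedding (m + m') (n + n')
      fun i => if i < m then f i else n + g (i - m) where
  strictMono i j hij := by
    have hi := hf.lt_iff i
    have := @hf.strictMono i j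
    have := @hg.strictMono (i - m) (j - m)
    dsimp only
    split_ifs <;> omega
  lt_iff i := by
    have := hf.lt_iff i
    have := hg.lt_iff (i - m)
    split_ifs <;> omega

theorem IsSegmentEmbedding.drop {m n t k : ℕ} {f : ℕ → ℕ} (hf : IsSegmentEmbedding m n f)
    (ht : ∀ i, f i < k ↔ i < t) :
    IsSegmentEmbedding (m - t) (n - k) fun i => f (t + i) - k where
  strictMono i j hij := by
    have := @hf.strictMono (t + i) (t + j)
    have := ht (t + i)
    have := ht (t + j)
    dsimp only
    omega
  lt_iff i := by
    have := hf.lt_iff (t + i)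
    have := ht (t + i)
    omega

theorem eq_of_le_of_length_le (h : Le σ π) (hlen : π.1 ≤ σ.1) : σ = π := by
  obtain ⟨n, σ⟩ := σ
  obtain ⟨m, π⟩ := π
  obtain ⟨f, hf, hval⟩ := h
  obtain rfl : n = m :=
    le_antisymm (by simpa using Fintype.card_le_of_injective f hf.injective) hlen
  obtain rfl : f = id := StrictMono.eq_id hf
  have hmono : StrictMono (π ∘ σ.symm) := fun i j hij => by
    simpa using (hval (σ.symm i) (σ.symm j)).1 (by simpa using hij)
  congr 1
  ext i
  simpa using congrArg Fin.val (congrFun hmono.eq_id (σ i)).symm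

theorem length_mono (h : Le σ π) : σ.1 ≤ π.1 := by
  obtain ⟨f, hf, -⟩ := h
  simpa using Fintype.card_le_of_injective f hf.injective

instance : PartialOrder PPerm where
  le := Le
  le_refl _ := ⟨id, strictMono_id, fun _ _ => Iff.rfl⟩
  le_trans _ _ _ := fun ⟨f, hf, hf'⟩ ⟨g, hg, hg'⟩ =>
    ⟨g ∘ f, hg.comp hf, fun i j => (hf' i j).trans (hg' _ _)⟩
  le_antisymm _ _ h h' := eq_of_le_of_length_le h (length_mono h')

theorem length_lt_of_lt (h : σ < π) : σ.1 < π.1 :=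
  lt_of_not_ge fun hlen => h.ne (eq_of_le_of_length_le h.le hlen)

noncomputable instance : LocallyFiniteOrderBot PPerm :=
  .ofIic PPerm
    (fun π => ((Finset.range (π.1 + 1)).sigma fun _ => Finset.univ).filter (· ≤ π))
    (fun π σ => by
      simpa [Nat.lt_succ_iff] using fun h : σ ≤ π => length_mono h)

theorem le_iff_exists_isSegmentEmbedding : σ ≤ π ↔ ∃ f g : ℕ → ℕ,
    IsSegmentEmbedding σ.1 π.1 f ∧ IsSegmentEmbedding σ.1 π.1 g ∧
      ∀ i < σ.1, oneLine π (f i) = g (oneLine σ i) := by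
  constructor
  · rintro ⟨u, hu, hval⟩
    have hv : StrictMono (π.2 ∘ u ∘ σ.2.symm) := fun i j hij => by
      simpa using (hval (σ.2.symm i) (σ.2.symm j)).1 (by simpa using hij)
    obtain ⟨f, hf, hfu⟩ := exists_isSegmentEmbedding hu
    obtain ⟨g, hg, hgv⟩ := exists_isSegmentEmbedding hv
    refine ⟨f, g, hf, hg, fun i hi => ?_⟩
    rw [oneLine_of_lt σ hi, hgv, hfu ⟨i, hi⟩, oneLine_val]
    simp
  · rintro ⟨f, g, hf, hg, hval⟩
    refine ⟨fun i => ⟨f i, (hf.lt_iff i).2 i.2⟩, fun i j hij => hf.strictMono hij, fun i j => ?_⟩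
    rw [Fin.lt_def, Fin.lt_def, ← oneLine_val, ← oneLine_val, ← oneLine_val, ← oneLine_val,
      hval i i.2, hval j j.2, hg.strictMono.lt_iff_lt]

theorem add_le_add_of_le (hac : a ≤ c) (hbd : b ≤ d) : a + b ≤ c + d := by
  obtain ⟨f, g, hf, hg, hval⟩ := le_iff_exists_isSegmentEmbedding.1 hac
  obtain ⟨f', g', hf', hg', hval'⟩ := le_iff_exists_isSegmentEmbedding.1 hbd
  refine le_iff_exists_isSegmentEmbedding.2
    ⟨_, _, hf.concat hf', hg.concat hg', fun i hi => ?_⟩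
  have ha := oneLine_lt_iff a i
  have hfi := hf.lt_iff i
  rw [length_add] at hi
  rw [oneLine_add, oneLine_add]
  by_cases hia : i < a.1
  · simp [hia, ha.2 hia, hfi.2 hia, hval i hia]
  · simp [hia, hval' (i - a.1) (by omega)]

instance : AddLeftMono PPerm := ⟨fun _ _ _ => add_le_add_of_le le_rfl⟩

instance : AddRightMono PPerm := ⟨fun _ _ _ h => add_le_add_of_le h le_rfl⟩

theorem nonneg (a : PPerm) : 0 ≤ a := ⟨Fin.elim0, fun i => i.elim0, fun i => i.elim0⟩

theorem one_le (ha : 0 < a.1) : one ≤ a :=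
  have (i j : Fin one.1) : i = j := Subsingleton.elim (α := Fin 1) i j
  ⟨fun _ => ⟨0, ha⟩, fun i j hij => absurd (this i j) hij.ne,
    fun i j => iff_of_false (this i j ▸ lt_irrefl _) (lt_irrefl _)⟩

theorem exists_add_of_le_add (h : c ≤ a + b) : ∃ x y, c = x + y ∧ x ≤ a ∧ y ≤ b := by
  obtain ⟨f, g, hf, hg, hval⟩ := le_iff_exists_isSegmentEmbedding.1 h
  obtain ⟨t, hft⟩ := exists_forall_mem_iff_lt hf.strictMono (isLowerSet_Iio a.1) (Set.finite_Iio _)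
  obtain ⟨t', hgt⟩ := exists_forall_mem_iff_lt hg.strictMono (isLowerSet_Iio a.1) (Set.finite_Iio _)
  simp only [Set.mem_Iio] at hft hgt
  have ht : t ≤ c.1 := le_of_not_gt fun hlt => by
    have := hf.lt_iff c.1
    have := hft c.1
    rw [length_add] at *
    omega
  have hct (i : ℕ) : oneLine c i < t' ↔ i < t := by
    rcases lt_or_ge i c.1 with hi | hi
    · rw [← hgt, ← hval i hi, oneLine_add_lt_iff, hft]
    · have := hg.lt_iff i
      have := hgt i
      rw [length_add] at *
      rw [oneLine_of_le c hi]
      omega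
  obtain rfl := eq_of_forall_apply_lt_iff hct
  obtain ⟨x, y, rfl, rfl⟩ := exists_eq_add_of_oneLine_lt_iff ht hct
  refine ⟨x, y, rfl, ?_, ?_⟩ <;> rw [le_iff_exists_isSegmentEmbedding]
  · refine ⟨f, g, ⟨hf.strictMono, hft⟩, ⟨hg.strictMono, hgt⟩, fun i hi => ?_⟩
    simpa [oneLine_add, hi, (hft i).2 hi] using hval i (hi.trans_le ht)
  · refine ⟨_, _, by simpa using hf.drop hft, by simpa using hg.drop hgt, fun i hi => ?_⟩
    have hfi : ¬ f (x.1 + i) < a.1 := by simp [hft]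
    have := hval (x.1 + i) (by simpa using hi)
    simp only [oneLine_add, hfi, if_false, Nat.add_sub_cancel_left,
      Nat.not_lt.2 (Nat.le_add_right _ _)] at this
    omega

end Order

section Indecomposable

theorem sumIndecomposable_one : SumIndecomposable one := by
  refine ⟨Nat.one_pos, fun ⟨a, b, ha, hb, h⟩ => ?_⟩
  have : 1 = a.1 + b.1 := congrArg Sigma.fst h
  omega

theorem eq_zero_or_eq_zero_of_add (h : SumIndecomposable (a + b)) : a = 0 ∨ b = 0 := by
  by_contra! hne
  exact h.2 ⟨a, b, Nat.pos_of_ne_zero fun ha => hne.1 (eq_zero_of_length_eq_zero ha),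
    Nat.pos_of_ne_zero fun hb => hne.2 (eq_zero_of_length_eq_zero hb), rfl⟩

theorem exists_sum_take_eq_and_sum_drop_eq {w : List PPerm} (hw : ∀ x ∈ w, SumIndecomposable x)
    (h : w.sum = a + b) : ∃ k, (w.take k).sum = a ∧ (w.drop k).sum = b := by
  induction w generalizing a with
  | nil =>
    have hlen : 0 = a.1 + b.1 := congrArg Sigma.fst h
    exact ⟨0, (eq_zero_of_length_eq_zero (by omega)).symm,
      (eq_zero_of_length_eq_zero (by omega)).symm⟩
  | cons x w ih =>
    obtain ⟨hx, hw⟩ := List.forall_mem_cons.1 hw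
    rw [List.sum_cons] at h
    rcases le_or_gt x.1 a.1 with hle | hlt
    · obtain ⟨z, rfl, hz⟩ := exists_add_of_add_eq_add h.symm hle
      obtain ⟨k, rfl, rfl⟩ := ih hw hz
      exact ⟨k + 1, by simp, by simp⟩
    · obtain ⟨z, rfl, rfl⟩ := exists_add_of_add_eq_add h hlt.le
      obtain rfl | rfl := eq_zero_or_eq_zero_of_add hx
      · exact ⟨0, by simp, by simp⟩
      · simp at hlt

theorem eq_and_eq_of_add_eq_add (ha : SumIndecomposable a) (hc : SumIndecomposable c)
    (h : a + b = c + d) : a = c ∧ b = d := by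
  refine add_eq_add_of_length_eq h ?_
  wlog hlen : c.1 ≤ a.1 generalizing a b c d
  · exact (this hc ha h.symm (le_of_not_ge hlen)).symm
  obtain ⟨z, rfl, -⟩ := exists_add_of_add_eq_add h hlen
  obtain rfl | rfl := eq_zero_or_eq_zero_of_add ha
  · exact absurd hc.1 (lt_irrefl 0)
  · rw [add_zero]

theorem list_eq_of_sum_eq {w w' : List PPerm} (hw : ∀ x ∈ w, SumIndecomposable x)
    (hw' : ∀ x ∈ w', SumIndecomposable x) (h : w.sum = w'.sum) : w = w' := by
  induction w generalizing w' with
  | nil =>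
    cases w' with
    | nil => rfl
    | cons y w' =>
      have := (List.forall_mem_cons.1 hw').1.1
      have : 0 = y.1 + w'.sum.1 := congrArg Sigma.fst h
      omega
  | cons x w ih =>
    obtain ⟨hx, hw⟩ := List.forall_mem_cons.1 hw
    cases w' with
    | nil =>
      have : x.1 + w.sum.1 = 0 := congrArg Sigma.fst h
      have := hx.1
      omega
    | cons y w' =>
      obtain ⟨hy, htail⟩ := List.forall_mem_cons.1 hw'
      obtain ⟨rfl, hsum⟩ := eq_and_eq_of_add_eq_add hx hy (by simpa using h)
      rw [ih hw htail hsum]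

end Indecomposable

section Framed

variable {α β : PPerm} {e r f e' r' f' : ℕ}

/-- The direct sum of `r` copies of `α`, framed by `e` copies of `1` before and `f` copies of `1`
after them. -/
def framed (α : PPerm) (e r f : ℕ) : PPerm := e • one + r • α + f • one

/-- The summands of `framed α e r f`; these are its sum components when `α` is indecomposable. -/
def framedSummands (α : PPerm) (e r f : ℕ) : List PPerm :=
  .replicate e one ++ .replicate r α ++ .replicate f one

theorem sum_framedSummands (α : PPerm) (e r f : ℕ) :
    (framedSummands α e r f).sum = framed α e r f := by
  simp [framedSummands, framed, add_assoc]

theorem sumIndecomposable_of_mem_framedSummands (hα : SumIndecomposable α) :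
    ∀ x ∈ framedSummands α e r f, SumIndecomposable x := by
  simp only [framedSummands, List.mem_append, List.mem_replicate]
  rintro x ((⟨-, rfl⟩ | ⟨-, rfl⟩) | ⟨-, rfl⟩)
  exacts [sumIndecomposable_one, hα, sumIndecomposable_one]

theorem length_framed (α : PPerm) (e r f : ℕ) : (framed α e r f).1 = e + r * α.1 + f := by
  simp [framed]

theorem framed_zero_one_zero (α : PPerm) : framed α 0 1 0 = α := by
  simp [framed]

theorem framed_add_framed (α : PPerm) (e i j f : ℕ) :
    framed α e i 0 + framed α 0 j f = framed α e (i + j) f := by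
  simp [framed, add_nsmul, add_assoc]

theorem framed_mono (he : e ≤ e') (hr : r ≤ r') (hf : f ≤ f') :
    framed α e r f ≤ framed α e' r' f' :=
  add_le_add_of_le (add_le_add_of_le (nsmul_le_nsmul_left (nonneg _) he)
    (nsmul_le_nsmul_left (nonneg _) hr)) (nsmul_le_nsmul_left (nonneg _) hf)

theorem le_framed (α : PPerm) (e r f : ℕ) : α ≤ framed α e (r + 1) f := by
  simpa only [framed_zero_one_zero] using
    framed_mono (α := α) (Nat.zero_le e) (Nat.le_add_left 1 r) (Nat.zero_le f)

theorem framed_strictMono (hα : 0 < α.1) (e f : ℕ) : StrictMono fun r => framed α e r f :=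
  Monotone.strictMono_of_injective (fun _ _ h => framed_mono le_rfl h le_rfl) fun i j hij => by
    have := congrArg Sigma.fst hij
    simpa [length_framed, hα.ne'] using this

theorem nsmul_one_le (he : e ≤ 1) (ha : 0 < a.1) : e • one ≤ a :=
  (nsmul_le_nsmul_left (nonneg _) he).trans ((one_nsmul one).trans_le (one_le ha))

theorem exists_framed_of_framed_eq_add (hα : SumIndecomposable α) (h : framed α e r f = a + b) :
    ∃ k, framed α (min k e) (min (k - e) r) (min (k - (e + r)) f) = a ∧
      framed α (e - k) (r - (k - e)) (f - (k - (e + r))) = b := by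
  rw [← sum_framedSummands] at h
  obtain ⟨k, rfl, rfl⟩ := exists_sum_take_eq_and_sum_drop_eq
    (sumIndecomposable_of_mem_framedSummands hα) h
  exact ⟨k, by simp [framed, framedSummands, List.take_append, Nat.sub_sub, add_assoc],
    by simp [framed, framedSummands, List.drop_append, Nat.sub_sub, add_assoc]⟩

theorem framed_le_add_iff (hα : SumIndecomposable α) (he : e ≤ 1) (hf : f ≤ 1) (ha : 0 < a.1)
    (hb : 0 < b.1) : framed α e r f ≤ a + b ↔
      ∃ i j, i + j = r ∧ framed α e i 0 ≤ a ∧ framed α 0 j f ≤ b := by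
  constructor
  · intro h
    obtain ⟨x, y, hxy, hxa, hyb⟩ := exists_add_of_le_add h
    obtain ⟨k, rfl, rfl⟩ := exists_framed_of_framed_eq_add hα hxy
    refine ⟨min (k - e) r, r - (k - e), by omega, ?_, ?_⟩
    · rcases lt_or_ge k e with hk | hk
      · simpa [framed, Nat.sub_eq_zero_of_le hk.le] using nsmul_one_le he ha
      · exact (framed_mono (by omega) le_rfl (Nat.zero_le _)).trans hxa
    · rcases lt_or_ge (e + r) k with hk | hk
      · simpa [framed, Nat.sub_eq_zero_of_le (by omega : r ≤ k - e)] using nsmul_one_le hf hb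
      · exact (framed_mono (Nat.zero_le _) le_rfl (by omega)).trans hyb
  · rintro ⟨i, j, rfl, hi, hj⟩
    exact framed_add_framed α e i j f ▸ add_le_add_of_le hi hj

theorem exists_forall_framed_le_iff (hα : 0 < α.1) (h : framed α e 0 f ≤ a) :
    ∃ t, ∀ i, framed α e i f ≤ a ↔ i ≤ t := by
  obtain ⟨t, ht⟩ := exists_forall_mem_iff_lt (framed_strictMono hα e f) (isLowerSet_Iic a)
    (Set.finite_Iic a)
  have : 0 < t := (ht 0).1 h
  exact ⟨t - 1, fun i => (ht i).trans (by omega)⟩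

theorem exists_card_framed_Iic_add_eq (hα : SumIndecomposable α) (ha : 0 < a.1) (hb : 0 < b.1) :
    ∃ s t : Fin 2 → ℕ, ∀ e f : Fin 2,
      ((Finset.Iic (a + b)).filter fun p => ∃ r, p = framed α e (r + 1) f).card = s e + t f := by
  have hleft (e : Fin 2) : ∃ s, ∀ i, framed α e i 0 ≤ a ↔ i ≤ s :=
    exists_forall_framed_le_iff hα.1 (by simpa [framed] using nsmul_one_le e.is_le ha)
  have hright (f : Fin 2) : ∃ t, ∀ j, framed α 0 j f ≤ b ↔ j ≤ t :=
    exists_forall_framed_le_iff hα.1 (by simpa [framed] using nsmul_one_le f.is_le hb)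
  choose s hs using hleft
  choose t ht using hright
  refine ⟨s, t, fun e f => ?_⟩
  have hle (r) : framed α e r f ≤ a + b ↔ r ≤ s e + t f := by
    simp only [framed_le_add_iff hα e.is_le f.is_le ha hb, hs, ht]
    exact ⟨by omega, fun h => ⟨min r (s e), r - s e, by omega, by omega, by omega⟩⟩
  have himage : (Finset.Iic (a + b)).filter (fun p => ∃ r, p = framed α e (r + 1) f) =
      (Finset.range (s e + t f)).image fun r => framed α e (r + 1) f := by
    ext p
    simp only [Finset.mem_filter, Finset.mem_Iic, Finset.mem_image, Finset.mem_range]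
    constructor
    · rintro ⟨hp, r, rfl⟩
      exact ⟨r, (hle _).1 hp, rfl⟩
    · rintro ⟨r, hr, rfl⟩
      exact ⟨(hle _).2 hr, r, rfl⟩
  have hinj : Function.Injective fun r => framed α e (r + 1) f :=
    (framed_strictMono hα.1 e f).injective.comp (add_left_injective 1)
  rw [himage, Finset.card_image_of_injective _ hinj, Finset.card_range]

theorem sumIndecomposable_eq_framed_iff (hπ : SumIndecomposable π) (hα : SumIndecomposable α) :
    (∃ r, π = framed α e (r + 1) f) ↔ α = π ∧ e = 0 ∧ f = 0 := by
  constructor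
  · rintro ⟨r, hr⟩
    have hw : [π] = framedSummands α e (r + 1) f :=
      list_eq_of_sum_eq (by simpa using hπ) (sumIndecomposable_of_mem_framedSummands hα)
        (by rw [sum_framedSummands, ← hr, List.sum_singleton])
    have hlen := congrArg List.length hw
    simp only [framedSummands, List.length_singleton, List.length_append,
      List.length_replicate] at hlen
    obtain ⟨rfl, rfl, rfl⟩ : e = 0 ∧ f = 0 ∧ r = 0 := by omega
    exact ⟨by simpa [framed_zero_one_zero] using hr.symm, rfl, rfl⟩
  · rintro ⟨rfl, rfl, rfl⟩
    exact ⟨0, (framed_zero_one_zero α).symm⟩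

theorem framed_eq_framed_iff (hα : SumIndecomposable α) (hβ : SumIndecomposable β)
    (hα1 : α ≠ one) :
    (∃ r', framed α e (r + 1) f = framed β e' (r' + 1) f') ↔ β = α ∧ e = e' ∧ f = f' := by
  constructor
  · rintro ⟨r', h⟩
    have hw : framedSummands α e (r + 1) f = framedSummands β e' (r' + 1) f' :=
      list_eq_of_sum_eq (sumIndecomposable_of_mem_framedSummands hα)
        (sumIndecomposable_of_mem_framedSummands hβ) (by simpa only [sum_framedSummands] using h)
    have hmem : α ∈ framedSummands β e' (r' + 1) f' := hw ▸ by simp [framedSummands]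
    obtain rfl : α = β := by simpa [framedSummands, hα1] using hmem
    have he : e = e' := by
      simpa [framedSummands, List.idxOf_append, List.replicate_succ, hα1] using
        congrArg (List.idxOf α) hw
    have hcount : e + f = e' + f' := by
      simpa [framedSummands, List.count_replicate, hα1] using congrArg (List.count one) hw
    exact ⟨rfl, he, by omega⟩
  · rintro ⟨rfl, rfl, rfl⟩
    exact ⟨r, rfl⟩

/-- The signed indicator of the framed sums of copies of `α`: its value is `(-1) ^ (e + f)` on
`framed α e r f` with `e, f ≤ 1 ≤ r`, and `0` elsewhere. Like `μ(σ, ·)` for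
indecomposable `σ`, it sums to `0` over `Iic π` whenever `π` is decomposable. -/
noncomputable def blockWeight (α p : PPerm) : ℤ :=
  ∑ e : Fin 2, ∑ f : Fin 2, if ∃ r, p = framed α e (r + 1) f then (-1) ^ (e + f : ℕ) else 0

theorem sum_blockWeight_Iic_add (hα : SumIndecomposable α) (ha : 0 < a.1) (hb : 0 < b.1) :
    ∑ p ∈ Finset.Iic (a + b), blockWeight α p = 0 := by
  obtain ⟨s, t, hcard⟩ := exists_card_framed_Iic_add_eq hα ha hb
  calc ∑ p ∈ Finset.Iic (a + b), blockWeight α p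
      = ∑ e : Fin 2, ∑ f : Fin 2, ((s e + t f : ℕ) : ℤ) * (-1) ^ (e + f : ℕ) := by
        simp only [blockWeight]
        rw [Finset.sum_comm]
        refine Finset.sum_congr rfl fun e _ => ?_
        rw [Finset.sum_comm]
        refine Finset.sum_congr rfl fun f _ => ?_
        rw [← Finset.sum_filter, Finset.sum_const, hcard, nsmul_eq_mul]
    _ = 0 := by
        simp only [Fin.sum_univ_two, Fin.val_zero, Fin.val_one]
        push_cast
        ring

theorem le_of_blockWeight_ne_zero (h : blockWeight α π ≠ 0) : α ≤ π := by
  obtain ⟨e, -, he⟩ := Finset.exists_ne_zero_of_sum_ne_zero h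
  obtain ⟨f, -, hf⟩ := Finset.exists_ne_zero_of_sum_ne_zero he
  obtain ⟨r, rfl⟩ := (ite_ne_right_iff.1 hf).1
  exact le_framed α e r f

theorem blockWeight_of_sumIndecomposable (hα : SumIndecomposable α) (hπ : SumIndecomposable π) :
    blockWeight α π = if α = π then 1 else 0 := by
  simp [blockWeight, sumIndecomposable_eq_framed_iff hπ hα]

theorem blockWeight_framed (hα : SumIndecomposable α) (hβ : SumIndecomposable β)
    (hα1 : α ≠ one) (e f : Fin 2) (r : ℕ) :
    blockWeight β (framed α e (r + 1) f) = if β = α then (-1) ^ (e + f : ℕ) else 0 := by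
  simp [blockWeight, framed_eq_framed_iff hα hβ hα1, ite_and, Fin.val_inj]

end Framed

section Moebius

variable {m n : ℕ}

theorem muAux_eq_muAux (hn : π.1 < n) (hm : π.1 < m) : muAux n σ π = muAux m σ π := by
  induction n generalizing m π with
  | zero => exact absurd hn (Nat.not_lt_zero _)
  | succ n ih =>
    obtain ⟨m, rfl⟩ := Nat.exists_eq_succ_of_ne_zero hm.ne_bot
    simp only [muAux]
    congr 3
    refine Finset.sum_congr rfl fun k hk => Finset.sum_congr rfl fun p _ => ?_
    have : k < π.1 := Finset.mem_range.1 hk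
    exact ih (show k < n by omega) (show k < m by omega)

theorem mu_self (σ : PPerm) : mu σ σ = 1 := by
  simp [mu, muAux]

theorem mu_of_not_le (h : ¬ σ ≤ π) : mu σ π = 0 := by
  have : ¬ Le σ π := h
  have : σ ≠ π := fun heq => h heq.le
  simp [mu, muAux, *]

theorem mu_of_lt (h : σ < π) : mu σ π = -∑ p ∈ Finset.Iio π, mu σ p := by
  have hle : Le σ π := h.le
  rw [mu, muAux, if_neg h.ne, if_pos hle, Finset.sum_sigma', neg_inj]
  have hlen (p : PPerm) (hp : p < π) : p.1 < π.1 := length_lt_of_lt hp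
  calc _ = ∑ p ∈ (Finset.Iio π).filter (σ ≤ ·), mu σ p := by
        refine Finset.sum_congr ?_ fun p hp => muAux_eq_muAux ?_ (Nat.lt_succ_self _)
        · ext p
          simp only [Finset.mem_sigma, Finset.mem_range, Finset.mem_filter, Finset.mem_univ,
            true_and, Finset.mem_Iio]
          exact ⟨fun ⟨hlt, hσp, hp⟩ =>
              ⟨lt_of_le_not_ge hp fun hge => (length_mono hge).not_gt hlt, hσp⟩,
            fun ⟨hp, hσp⟩ => ⟨hlen p hp, hσp, hp.le⟩⟩
        · exact hlen p (Finset.mem_Iio.1 (Finset.mem_filter.1 hp).1)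
    _ = ∑ p ∈ Finset.Iio π, mu σ p :=
        Finset.sum_filter_of_ne fun p _ hne => not_imp_comm.1 mu_of_not_le hne

theorem sum_mu_Iic (σ π : PPerm) : ∑ p ∈ Finset.Iic π, mu σ p = if σ = π then 1 else 0 := by
  rw [← Finset.sum_Iio_add_eq_sum_Iic]
  split_ifs with heq
  · subst heq
    rw [mu_self, Finset.sum_eq_zero fun p hp => mu_of_not_le (Finset.mem_Iio.1 hp).not_ge, zero_add]
  · by_cases hle : σ ≤ π
    · rw [mu_of_lt (lt_of_le_of_ne hle heq), add_neg_cancel]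
    · rw [mu_of_not_le hle, add_zero]
      exact Finset.sum_eq_zero fun p hp =>
        mu_of_not_le fun h => hle (h.trans (Finset.mem_Iio.1 hp).le)

theorem sum_filter_Iic_mul_blockWeight (w : PPerm → ℤ) (h : σ ≤ π) :
    ∑ α ∈ (Finset.Iic σ).filter SumIndecomposable, w α * blockWeight α σ =
      ∑ α ∈ (Finset.Iic π).filter SumIndecomposable, w α * blockWeight α σ := by
  refine Finset.sum_subset (Finset.filter_subset_filter _ (Finset.Iic_subset_Iic.2 h))
    fun α hmem hnot_mem => ?_
  have hle : ¬ α ≤ σ := fun hle =>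
    hnot_mem (Finset.mem_filter.2 ⟨Finset.mem_Iic.2 hle, (Finset.mem_filter.1 hmem).2⟩)
  rw [not_imp_comm.1 le_of_blockWeight_ne_zero hle, mul_zero]

theorem sum_Iic_add_sum_mul_blockWeight (w : PPerm → ℤ) (ha : 0 < a.1) (hb : 0 < b.1) :
    ∑ p ∈ Finset.Iic (a + b),
      ∑ α ∈ (Finset.Iic p).filter SumIndecomposable, w α * blockWeight α p = 0 := by
  rw [Finset.sum_congr rfl fun p hp => sum_filter_Iic_mul_blockWeight w (Finset.mem_Iic.1 hp),
    Finset.sum_comm]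
  refine Finset.sum_eq_zero fun α hα => ?_
  rw [← Finset.mul_sum, sum_blockWeight_Iic_add (Finset.mem_filter.1 hα).2 ha hb, mul_zero]

theorem mu_eq_sum_blockWeight (hσ : SumIndecomposable σ) (π : PPerm) :
    mu σ π = ∑ α ∈ (Finset.Iic π).filter SumIndecomposable, mu σ α * blockWeight α π := by
  revert π
  refine congrFun (eq_of_forall_eq_or_sum_Iic_eq fun π => ?_)
  by_cases hπ : SumIndecomposable π
  · left
    rw [Finset.sum_eq_single_of_mem π (by simp [hπ])]
    · simp [blockWeight_of_sumIndecomposable hπ hπ]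
    · intro α hα hne
      simp [blockWeight_of_sumIndecomposable (Finset.mem_filter.1 hα).2 hπ, hne]
  rcases Nat.eq_zero_or_pos π.1 with h0 | hpos
  · left
    have hnot_le {α} (hα : SumIndecomposable α) : ¬ α ≤ π := fun hle =>
      (hα.1.trans_le (length_mono hle)).ne' h0
    rw [mu_of_not_le (hnot_le hσ), Finset.sum_eq_zero]
    intro α hα
    obtain ⟨hle, hα⟩ := Finset.mem_filter.1 hα
    exact absurd (Finset.mem_Iic.1 hle) (hnot_le hα)
  · right
    have hσ_ne : σ ≠ π := fun h => hπ (h ▸ hσ)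
    obtain ⟨a, b, ha, hb, rfl⟩ : ∃ a b : PPerm, 0 < a.1 ∧ 0 < b.1 ∧ π = a + b := by
      simpa only [SumIndecomposable, hpos, true_and, not_not, dsum_eq_add] using hπ
    rw [sum_mu_Iic, if_neg hσ_ne, sum_Iic_add_sum_mul_blockWeight _ ha hb]

theorem mu_framed {α : PPerm} (hσ : SumIndecomposable σ) (hα : SumIndecomposable α)
    (hα1 : α ≠ one) (e f : Fin 2) (r : ℕ) :
    mu σ (framed α e (r + 1) f) = (-1) ^ (e + f : ℕ) * mu σ α := by
  rw [mu_eq_sum_blockWeight hσ, Finset.sum_eq_single_of_mem α (by simp [le_framed, hα])]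
  · rw [blockWeight_framed hα hα hα1, if_pos rfl, mul_comm]
  · intro β hβ hne
    rw [blockWeight_framed hα (Finset.mem_filter.1 hβ).2 hα1, if_neg hne, mul_zero]

end Moebius

end PPerm

/-- **(Lemma `lemma_pi_has_single_block`.)**  Let `σ` and `α` be sum
indecomposable permutations with `|α| ≥ 2` and let `r ≥ 1`.  Then
`μ(σ, ⊕ʳα) = μ(σ,α)` and `μ(σ, 1 ⊕ (⊕ʳα) ⊕ 1) = μ(σ,α)`, while
`μ(σ, 1 ⊕ (⊕ʳα)) = −μ(σ,α)` and `μ(σ, (⊕ʳα) ⊕ 1) = −μ(σ,α)`. -/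
theorem mu_of_family (σ α : PPerm) (hσ : SumIndecomposable σ)
    (hα : SumIndecomposable α) (hα2 : 2 ≤ α.1) (r : ℕ) (hr : 1 ≤ r) :
    mu σ (PPerm.nsum α r) = mu σ α ∧
    mu σ (PPerm.dsum PPerm.one (PPerm.dsum (PPerm.nsum α r) PPerm.one)) = mu σ α ∧
    mu σ (PPerm.dsum PPerm.one (PPerm.nsum α r)) = - mu σ α ∧
    mu σ (PPerm.dsum (PPerm.nsum α r) PPerm.one) = - mu σ α := by
  obtain ⟨r, rfl⟩ := Nat.exists_eq_add_of_le' hr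
  have hα1 : α ≠ PPerm.one := by
    rintro rfl
    exact absurd hα2 (by decide)
  have hmu (e f : Fin 2) := PPerm.mu_framed hσ hα hα1 e f r
  simp only [PPerm.nsum_eq_nsmul, PPerm.dsum_eq_add]
  refine ⟨?_, ?_, ?_, ?_⟩
  · simpa [PPerm.framed] using hmu 0 0
  · simpa [PPerm.framed, add_assoc] using hmu 1 1
  · simpa [PPerm.framed] using hmu 1 0
  · simpa [PPerm.framed] using hmu 0 1
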